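/- For each integer $n\ge 1$ let $m(n)$ be a positive integer, and let $X=(X_{ij})_{1\le i,j\le n}$ be the random $n\times n$ matrix whose entry $X_{ij}$ is the number of those among $m(n)$ independent, uniformly distributed random points of the grid $\{1,\dots,n\}\times\{1,\dots,n\}$ that fall in the cell $(i,j)$; that is, $X$ has the multinomial distribution with $m(n)$ trials and $n^2$ equiprobable cells. Let $S_n$ be the group of permutations of $\{1,\dots,n\}$. Let $c<1$ be a real number and suppose that $$\limsup_{n\to\infty}\frac{m(n)\,n^{-2}}{\log n}\le c,$$ where the limsup is taken in $[-\infty,\infty]$. Then $$\lim_{n\to\infty}\mathbb P\Big(\min_{\sigma\in S_n}\sum_{i=1}^n X_{i\sigma(i)}=0\Big)=1.$$ -/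

import Mathlib

open MeasureTheory Filter

noncomputable section

/-- The uniform probability measure on the `n × n` grid of cells (for `n ≥ 1`). -/
def cellMeasure (n : ℕ) : Measure (Fin n × Fin n) :=
  ((n : ENNReal) ^ 2)⁻¹ • Measure.count

/-- The law of `m` i.i.d. points, each uniformly distributed on the `n × n` grid;
under this measure the matrix of cell counts is multinomial `M(m, n²)`. -/
def gridMeasure (m n : ℕ) : Measure (Fin m → Fin n × Fin n) :=
  Measure.pi fun _ => cellMeasure n

/-- `X_{ij}`: the number of the `m` points falling in cell `(i, j)`. -/
def cellCount {m n : ℕ} (i j : Fin n) (ω : Fin m → Fin n × Fin n) : ℕ :=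
  (Finset.univ.filter fun k => ω k = (i, j)).card

/-- The assignment sum `S(σ) = ∑ i, X_{i σ(i)}`. -/
def assignSum {m n : ℕ} (σ : Equiv.Perm (Fin n)) (ω : Fin m → Fin n × Fin n) : ℝ :=
  ∑ i, (cellCount i (σ i) ω : ℝ)

/-- `min_{σ ∈ S_n} S(σ)`; the infimum is over a finite nonempty set, so it is attained. -/
def minAssign {m n : ℕ} (ω : Fin m → Fin n × Fin n) : ℝ :=
  ⨅ σ : Equiv.Perm (Fin n), assignSum σ ω

end

open Finset in
/-- The `m`-tuples in `α` that hit every point of `A`. -/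
def coveringTuples {α : Type*} [Fintype α] [DecidableEq α] (m : ℕ) (A : Finset α) :
    Finset (Fin m → α) :=
  univ.filter fun ω => ∀ a ∈ A, ∃ k, ω k = a

open Finset in
theorem mem_coveringTuples {α : Type*} [Fintype α] [DecidableEq α] {m : ℕ} {A : Finset α}
    {ω : Fin m → α} : ω ∈ coveringTuples m A ↔ ∀ a ∈ A, ∃ k, ω k = a := by
  simp [coveringTuples]

open Finset in
theorem card_coveringTuples_succ {α : Type*} [Fintype α] [DecidableEq α] (m : ℕ)
    (A : Finset α) :
    (coveringTuples (m + 1) A).card = ∑ x, (coveringTuples m (A.erase x)).card := by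
  rw [← Finset.card_sigma]
  symm
  refine Finset.card_bij' (fun p _ => Fin.cons p.1 p.2) (fun ω _ => ⟨ω 0, Fin.tail ω⟩)
    ?_ ?_ ?_ ?_
  · rintro ⟨x, ω⟩ h
    simp only [mem_sigma, mem_univ, true_and, mem_coveringTuples, mem_erase] at h ⊢
    intro a ha
    by_cases hax : a = x
    · exact ⟨0, by simp [hax]⟩
    · obtain ⟨k, hk⟩ := h a ⟨hax, ha⟩
      exact ⟨k.succ, by simpa using hk⟩
  · intro ω h
    simp only [mem_sigma, mem_univ, true_and, mem_coveringTuples, mem_erase] at h ⊢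
    rintro a ⟨hax, ha⟩
    obtain ⟨k, hk⟩ := h a ha
    refine Fin.cases (fun h0 => absurd h0.symm hax) (fun k hk => ⟨k, hk⟩) k hk
  · rintro ⟨x, ω⟩ _
    simp
  · intro ω _
    simp

/-- Negative dependence of the occupation events: the probability that all the cells of `A` are
hit is at most the product of the individual probabilities. -/
theorem card_coveringTuples_le {α : Type*} [Fintype α] [DecidableEq α] [Nonempty α] (m : ℕ)
    (A : Finset α) :
    ((coveringTuples m A).card : ℝ) ≤
      (Fintype.card α : ℝ) ^ m * (1 - (1 - (Fintype.card α : ℝ)⁻¹) ^ m) ^ A.card := by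
  have hN : (0 : ℝ) < Fintype.card α := by exact_mod_cast Fintype.card_pos
  have hN1 : (1 : ℝ) ≤ Fintype.card α := by exact_mod_cast Fintype.card_pos (α := α)
  set N : ℝ := (Fintype.card α : ℝ) with hNdef
  have hr0 : 0 ≤ 1 - N⁻¹ := sub_nonneg.2 (inv_le_one_of_one_le₀ hN1)
  have hr1 : 1 - N⁻¹ ≤ 1 := by linarith [inv_pos.2 hN]
  induction m generalizing A with
  | zero =>
    rcases A.eq_empty_or_nonempty with rfl | ⟨a, ha⟩
    · simp [coveringTuples]
    · have : coveringTuples 0 A = ∅ := by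
        ext ω
        simp only [mem_coveringTuples, Finset.notMem_empty, iff_false]
        intro h
        obtain ⟨k, -⟩ := h a ha
        exact k.elim0
      rw [this]
      simp
  | succ m ih =>
    set p : ℝ := 1 - (1 - N⁻¹) ^ m with hp
    have hp0 : 0 ≤ p := sub_nonneg.2 (pow_le_one₀ hr0 hr1)
    have hp1 : p ≤ 1 := by linarith [pow_nonneg hr0 m]
    have hpsucc : 1 - (1 - N⁻¹) ^ (m + 1) = p + (1 - p) * N⁻¹ := by rw [pow_succ, hp]; ring
    rw [hpsucc, card_coveringTuples_succ]
    push_cast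
    have hk : (A.card : ℝ) ≤ N := by rw [hNdef]; exact_mod_cast Finset.card_le_univ A
    have hsum : ∑ x, ((coveringTuples m (A.erase x)).card : ℝ) ≤
        A.card * (N ^ m * p ^ (A.card - 1)) + (N - A.card) * (N ^ m * p ^ A.card) := by
      rw [← Finset.sum_add_sum_compl A]
      refine add_le_add ?_ ?_
      · rw [← nsmul_eq_mul]
        refine Finset.sum_le_card_nsmul _ _ _ fun x hx => ?_
        simpa [Finset.card_erase_of_mem hx] using ih (A.erase x)
      · have : N - A.card = ((Aᶜ.card : ℕ) : ℝ) := by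
          rw [Finset.card_compl, Nat.cast_sub (Finset.card_le_univ A)]
        rw [this, ← nsmul_eq_mul]
        refine Finset.sum_le_card_nsmul _ _ _ fun x hx => ?_
        simpa [Finset.erase_eq_of_notMem (Finset.mem_compl.1 hx)] using ih (A.erase x)
    refine hsum.trans ?_
    have hδ : 0 ≤ (1 - p) * N⁻¹ := mul_nonneg (by linarith) (inv_pos.2 hN).le
    rcases Nat.eq_zero_or_pos A.card with h0 | hpos
    · simp [h0, pow_succ, mul_comm]
    · obtain ⟨k, hk'⟩ := Nat.exists_eq_succ_of_ne_zero hpos.ne'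
      have hbern : p ^ (k + 1) + (k + 1 : ℕ) * p ^ k * ((1 - p) * N⁻¹) ≤
          (p + (1 - p) * N⁻¹) ^ (k + 1) := by
        rcases hp0.eq_or_lt with hp0' | hp0'
        · rw [← hp0']
          rcases k with _ | k
          · simp
          · have : (0 : ℝ) ≤ N⁻¹ := (inv_pos.2 hN).le
            simp only [ne_eq, Nat.add_eq_zero_iff, one_ne_zero, and_false, not_false_eq_true,
              zero_pow, mul_zero, zero_mul, add_zero]
            positivity
        · have h1 := one_add_mul_le_pow (a := (1 - p) * N⁻¹ / p)
            (by have := div_nonneg hδ hp0; linarith) (k + 1)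
          have h2 := mul_le_mul_of_nonneg_left h1 (pow_nonneg hp0 (k + 1))
          rw [← mul_pow] at h2
          have e1 : p * (1 + (1 - p) * N⁻¹ / p) = p + (1 - p) * N⁻¹ := by
            field_simp
          have e2 : p ^ (k + 1) * (1 + ((k + 1 : ℕ) : ℝ) * ((1 - p) * N⁻¹ / p)) =
              p ^ (k + 1) + (k + 1 : ℕ) * p ^ k * ((1 - p) * N⁻¹) := by
            rw [pow_succ]; field_simp
          rwa [e1, e2] at h2
      rw [hk']
      have h3 := mul_le_mul_of_nonneg_left hbern (pow_nonneg hN.le (m + 1))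
      refine le_trans (le_of_eq ?_) h3
      simp only [Nat.succ_eq_add_one, Nat.add_sub_cancel]
      rw [pow_succ N m, pow_succ p k]
      field_simp
      ring

theorem gridMeasure_apply (m : ℕ) {n : ℕ} (hn : n ≠ 0) (s : Finset (Fin m → Fin n × Fin n)) :
    gridMeasure m n (s : Set (Fin m → Fin n × Fin n)) = s.card * (((n : ENNReal) ^ 2)⁻¹) ^ m := by
  have hfin : IsFiniteMeasure (cellMeasure n) := by
    refine ⟨?_⟩
    rw [cellMeasure, Measure.smul_apply, smul_eq_mul]
    refine ENNReal.mul_lt_top ?_ (measure_lt_top _ _)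
    rw [ENNReal.inv_lt_top]
    exact pos_iff_ne_zero.2 (pow_ne_zero 2 (by exact_mod_cast hn))
  rw [← MeasureTheory.sum_measure_singleton]
  have : ∀ x : Fin m → Fin n × Fin n,
      gridMeasure m n {x} = (((n : ENNReal) ^ 2)⁻¹) ^ m := fun x => by
    rw [gridMeasure, Measure.pi_singleton]
    simp [cellMeasure]
  simp [this]

theorem minAssign_eq_zero {m n : ℕ} {ω : Fin m → Fin n × Fin n} {σ : Equiv.Perm (Fin n)}
    (h : ∀ i, cellCount i (σ i) ω = 0) : minAssign ω = 0 := by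
  have hnn : ∀ τ : Equiv.Perm (Fin n), 0 ≤ assignSum τ ω := fun τ =>
    Finset.sum_nonneg fun _ _ => Nat.cast_nonneg _
  refine le_antisymm ?_ (le_ciInf hnn)
  refine (ciInf_le ⟨0, Set.forall_mem_range.2 hnn⟩ σ).trans_eq ?_
  simp [assignSum, h]

/-- By Hall's theorem, if no permutation avoids all the points, then some `s × t` with
`|s| + |t| = n + 1` has all its cells occupied. -/
theorem exists_covered_rectangle {m n : ℕ} {ω : Fin m → Fin n × Fin n} (h : minAssign ω ≠ 0) :
    ∃ s t : Finset (Fin n), 1 ≤ s.card ∧ t.card = n + 1 - s.card ∧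
      ω ∈ coveringTuples m (s ×ˢ t) := by
  classical
  by_contra hcon
  refine h ?_
  let N : Fin n → Finset (Fin n) := fun i => Finset.univ.filter fun j => cellCount i j ω = 0
  have hall : ∀ s : Finset (Fin n), s.card ≤ (s.biUnion N).card := by
    intro s
    by_contra! hs
    refine hcon ?_
    have hcard : n + 1 - s.card ≤ (s.biUnion N)ᶜ.card := by
      rw [Finset.card_compl, Fintype.card_fin]; omega
    obtain ⟨t, ht, htc⟩ := Finset.exists_subset_card_eq hcard
    refine ⟨s, t, by omega, htc, mem_coveringTuples.2 ?_⟩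
    rintro ⟨i, j⟩ hij
    obtain ⟨hi, hj⟩ := Finset.mem_product.1 hij
    have hj' := Finset.mem_compl.1 (ht hj)
    by_contra! hne
    refine hj' (Finset.mem_biUnion.2 ⟨i, hi, ?_⟩)
    simp [N, cellCount, hne]
  obtain ⟨f, hf, hfN⟩ := (Finset.all_card_le_biUnion_card_iff_exists_injective N).1 hall
  refine minAssign_eq_zero (σ := Equiv.ofBijective f (Finite.injective_iff_bijective.1 hf))
    fun i => ?_
  simpa [N] using hfN i

/-- The union bound over all rectangles provided by Hall's theorem. -/
theorem card_minAssign_ne_zero_le {m n : ℕ} (hn : 1 ≤ n) [DecidablePred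
    fun ω : Fin m → Fin n × Fin n => minAssign ω ≠ 0] :
    (((Finset.univ.filter fun ω : Fin m → Fin n × Fin n => minAssign ω ≠ 0).card : ℕ) : ℝ) ≤
      ((n : ℝ) ^ 2) ^ m * ∑ k ∈ Finset.Icc 1 n, (n.choose k * n.choose (n + 1 - k) : ℝ) *
        (1 - (1 - ((n : ℝ) ^ 2)⁻¹) ^ m) ^ (k * (n + 1 - k)) := by
  classical
  have : Nonempty (Fin n) := ⟨⟨0, hn⟩⟩
  have hsub : (Finset.univ.filter fun ω : Fin m → Fin n × Fin n => minAssign ω ≠ 0) ⊆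
      (Finset.Icc 1 n).biUnion fun k =>
        (Finset.powersetCard k (Finset.univ : Finset (Fin n)) ×ˢ
          Finset.powersetCard (n + 1 - k) (Finset.univ : Finset (Fin n))).biUnion fun p =>
            coveringTuples m (p.1 ×ˢ p.2) := by
    intro ω hω
    obtain ⟨s, t, hs, ht, hst⟩ := exists_covered_rectangle (Finset.mem_filter.1 hω).2
    have hsn : s.card ≤ n := by simpa using Finset.card_le_univ s
    simp only [Finset.mem_biUnion, Finset.mem_product, Finset.mem_powersetCard,
      Finset.subset_univ, true_and, Finset.mem_Icc]
    exact ⟨s.card, ⟨hs, hsn⟩, (s, t), ⟨rfl, ht⟩, hst⟩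
  have hle := (Finset.card_le_card hsub).trans Finset.card_biUnion_le
  refine (Nat.cast_le.2 hle).trans ?_
  push_cast
  rw [Finset.mul_sum]
  refine Finset.sum_le_sum fun k _ => ?_
  refine (Nat.cast_le.2 Finset.card_biUnion_le).trans ?_
  push_cast
  refine (Finset.sum_le_card_nsmul _ _ (((n : ℝ) ^ 2) ^ m *
    (1 - (1 - ((n : ℝ) ^ 2)⁻¹) ^ m) ^ (k * (n + 1 - k))) fun p hp => ?_).trans_eq ?_
  · simp only [Finset.mem_product, Finset.mem_powersetCard, Finset.subset_univ,
      true_and] at hp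
    have := card_coveringTuples_le m (p.1 ×ˢ p.2)
    simpa [Finset.card_product, hp.1, hp.2, sq] using this
  · simp [Finset.card_product, Finset.card_powersetCard]
    ring

/-- One term of the union bound, when the index is at most half of the range. -/
theorem choose_mul_choose_mul_exp_le {n k : ℕ} {q : ℝ} (hq : 0 ≤ q) (hk : 1 ≤ k)
    (hkn : 2 * k ≤ n + 1) (hsmall : (n : ℝ) ^ 2 * Real.exp (-(q * n / 2)) ≤ 1) :
    (n.choose k * n.choose (n + 1 - k) : ℝ) * Real.exp (-q) ^ (k * (n + 1 - k)) ≤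
      (n : ℝ) ^ 2 * Real.exp (-(q * n / 2)) := by
  have hn1 : 1 ≤ n := by omega
  have hnR : (1 : ℝ) ≤ n := by exact_mod_cast hn1
  have h1 : (n.choose k : ℝ) ≤ (n : ℝ) ^ k := by exact_mod_cast Nat.choose_le_pow n k
  have h2 : (n.choose (n + 1 - k) : ℝ) ≤ (n : ℝ) ^ k := by
    have e : n.choose (n + 1 - k) = n.choose (k - 1) := by
      rw [← Nat.choose_symm (by omega : k - 1 ≤ n)]; congr 1; omega
    rw [e]
    refine le_trans (b := (n : ℝ) ^ (k - 1)) (by exact_mod_cast Nat.choose_le_pow n (k - 1)) ?_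
    exact pow_le_pow_right₀ hnR (Nat.sub_le k 1)
  have h3 : Real.exp (-q) ^ (k * (n + 1 - k)) ≤ Real.exp (-(q * n / 2)) ^ k := by
    rw [← Real.exp_nat_mul, ← Real.exp_nat_mul, Real.exp_le_exp]
    have hcast : ((n + 1 - k : ℕ) : ℝ) = n + 1 - k := by
      rw [Nat.cast_sub (by omega)]; push_cast; ring
    have hkR : 2 * (k : ℝ) ≤ n + 1 := by exact_mod_cast hkn
    push_cast
    rw [hcast]
    have : 0 ≤ (k : ℝ) * q * ((n : ℝ) + 1 - k - n / 2) :=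
      mul_nonneg (by positivity) (by linarith)
    linarith
  calc (n.choose k * n.choose (n + 1 - k) : ℝ) * Real.exp (-q) ^ (k * (n + 1 - k))
      ≤ ((n : ℝ) ^ k * (n : ℝ) ^ k) * Real.exp (-(q * n / 2)) ^ k := by gcongr
    _ = ((n : ℝ) ^ 2 * Real.exp (-(q * n / 2))) ^ k := by ring
    _ ≤ _ := pow_le_of_le_one (by positivity) hsmall (by omega)

theorem sum_choose_mul_choose_mul_pow_le {n : ℕ} {q : ℝ} (hq : 0 ≤ q) (hq1 : q ≤ 1)
    (hsmall : (n : ℝ) ^ 2 * Real.exp (-(q * n / 2)) ≤ 1) :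
    ∑ k ∈ Finset.Icc 1 n, (n.choose k * n.choose (n + 1 - k) : ℝ) *
        (1 - q) ^ (k * (n + 1 - k)) ≤ (n : ℝ) ^ 3 * Real.exp (-(q * n / 2)) := by
  have hterm : ∀ k ∈ Finset.Icc 1 n, (n.choose k * n.choose (n + 1 - k) : ℝ) *
      (1 - q) ^ (k * (n + 1 - k)) ≤ (n : ℝ) ^ 2 * Real.exp (-(q * n / 2)) := by
    intro k hk
    obtain ⟨hk1, hkn⟩ := Finset.mem_Icc.1 hk
    have hpow : (1 - q) ^ (k * (n + 1 - k)) ≤ Real.exp (-q) ^ (k * (n + 1 - k)) :=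
      pow_le_pow_left₀ (by linarith) (Real.one_sub_le_exp_neg q) _
    refine (mul_le_mul_of_nonneg_left hpow (by positivity)).trans ?_
    rcases le_total (2 * k) (n + 1) with h | h
    · exact choose_mul_choose_mul_exp_le hq hk1 h hsmall
    · have := choose_mul_choose_mul_exp_le (k := n + 1 - k) hq (by omega) (by omega) hsmall
      rwa [show n + 1 - (n + 1 - k) = k by omega, mul_comm (n.choose (n + 1 - k) : ℝ),
        mul_comm (n + 1 - k) k] at this
  refine (Finset.sum_le_card_nsmul _ _ _ hterm).trans_eq ?_
  simp
  ring

theorem exp_neg_le_one_sub_inv_pow {m : ℕ} {N : ℝ} (hN : 1 < N) :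
    Real.exp (-(m / (N - 1))) ≤ (1 - N⁻¹) ^ m := by
  have h0 : 0 < N - 1 := by linarith
  have h1 : Real.exp (-(1 / (N - 1))) ≤ 1 - N⁻¹ := by
    rw [Real.exp_neg]
    have h2 : 1 - N⁻¹ = (1 + 1 / (N - 1))⁻¹ := by
      have : N ≠ 0 := by linarith
      field_simp
      ring
    rw [h2]
    refine inv_anti₀ (by positivity) ?_
    linarith [Real.add_one_le_exp (1 / (N - 1))]
  calc Real.exp (-(m / (N - 1))) = Real.exp (-(1 / (N - 1))) ^ m := by
        rw [← Real.exp_nat_mul]; congr 1; ring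
    _ ≤ _ := pow_le_pow_left₀ (Real.exp_pos _).le h1 m

/-- If `m ≤ c n² log n`, the probability that a given cell is empty is at least `n⁻ᶜ / e`. -/
theorem rpow_neg_mul_exp_le_one_sub_inv_pow {m n : ℕ} {c : ℝ} (hc0 : 0 ≤ c) (hc1 : c ≤ 1)
    (hn : 2 ≤ n) (hm : (m : ℝ) * ((n : ℝ) ^ 2)⁻¹ / Real.log n ≤ c) :
    (n : ℝ) ^ (-c) * Real.exp (-1) ≤ (1 - ((n : ℝ) ^ 2)⁻¹) ^ m := by
  have hnR : (2 : ℝ) ≤ n := by exact_mod_cast hn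
  have hlog : 0 < Real.log n := Real.log_pos (by linarith)
  have hlogle : Real.log n ≤ n - 1 := Real.log_le_sub_one_of_pos (by linarith)
  have hN : (1 : ℝ) < (n : ℝ) ^ 2 := by nlinarith
  refine le_trans ?_ (exp_neg_le_one_sub_inv_pow hN)
  rw [Real.rpow_def_of_pos (by linarith), ← Real.exp_add, Real.exp_le_exp]
  have hm' : (m : ℝ) ≤ c * Real.log n * (n : ℝ) ^ 2 := by
    rw [div_le_iff₀ hlog, ← div_eq_mul_inv, div_le_iff₀ (by linarith)] at hm
    exact hm
  have : (m : ℝ) / ((n : ℝ) ^ 2 - 1) ≤ c * Real.log n + 1 := by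
    rw [div_le_iff₀ (by linarith)]
    have h1 : c * Real.log n ≤ (n : ℝ) ^ 2 - 1 := by nlinarith
    nlinarith
  linarith

theorem tendsto_pow_mul_exp_neg_rpow (d : ℕ) {a δ : ℝ} (ha : 0 < a) (hδ : 0 < δ) :
    Tendsto (fun n : ℕ => (n : ℝ) ^ d * Real.exp (-(a * (n : ℝ) ^ δ))) atTop (nhds 0) := by
  have h1 := (tendsto_rpow_mul_exp_neg_mul_atTop_nhds_zero (d / δ) a ha).comp
    ((tendsto_rpow_atTop hδ).comp tendsto_natCast_atTop_atTop)
  refine h1.congr fun n => ?_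
  simp only [Function.comp_apply]
  rw [← Real.rpow_mul (Nat.cast_nonneg n), mul_div_cancel₀ _ hδ.ne', Real.rpow_natCast, neg_mul]

theorem gridMeasure_minAssign_ne_zero_le {m n : ℕ} (hn : 1 ≤ n) {q : ℝ}
    (hq0 : 0 ≤ q) (hq : q ≤ (1 - ((n : ℝ) ^ 2)⁻¹) ^ m)
    (hsmall : (n : ℝ) ^ 2 * Real.exp (-(q * n / 2)) ≤ 1) :
    gridMeasure m n {ω | minAssign ω ≠ 0} ≤
      ENNReal.ofReal ((n : ℝ) ^ 3 * Real.exp (-(q * n / 2))) := by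
  classical
  have hnR : (1 : ℝ) ≤ n := by exact_mod_cast hn
  have hN : (0 : ℝ) < (n : ℝ) ^ 2 := by positivity
  have hr1 : (1 - ((n : ℝ) ^ 2)⁻¹) ^ m ≤ 1 :=
    pow_le_one₀ (sub_nonneg.2 (inv_le_one_of_one_le₀ (one_le_pow₀ hnR)))
      (by linarith [inv_pos.2 hN])
  have hset : {ω : Fin m → Fin n × Fin n | minAssign ω ≠ 0} =
      ((Finset.univ.filter fun ω : Fin m → Fin n × Fin n => minAssign ω ≠ 0 : Finset _) :
        Set (Fin m → Fin n × Fin n)) := by ext; simp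
  rw [hset, gridMeasure_apply m (by omega)]
  set K := (Finset.univ.filter fun ω : Fin m → Fin n × Fin n => minAssign ω ≠ 0).card
  have hK : (K : ENNReal) * (((n : ENNReal) ^ 2)⁻¹) ^ m =
      ENNReal.ofReal (K * (((n : ℝ) ^ 2)⁻¹) ^ m) := by
    rw [ENNReal.ofReal_mul (Nat.cast_nonneg K), ENNReal.ofReal_natCast,
      ENNReal.ofReal_pow (by positivity), ENNReal.ofReal_inv_of_pos hN,
      ENNReal.ofReal_pow (by positivity), ENNReal.ofReal_natCast]
  rw [hK]
  refine ENNReal.ofReal_le_ofReal ?_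
  refine le_trans ?_ (sum_choose_mul_choose_mul_pow_le hq0 (hq.trans hr1) hsmall)
  rw [inv_pow, ← div_eq_mul_inv, div_le_iff₀ (by positivity), mul_comm]
  refine (card_minAssign_ne_zero_le hn).trans ?_
  gcongr

/-- If `limsup m(n) n⁻² / log n ≤ c` with `c < 1`, then `P(min_σ ∑ i, X_{i σ(i)} = 0) → 1`.
The limsup is taken in the extended reals, so that the hypothesis excludes unbounded ratios. -/
theorem min_assignment_vanishes (m : ℕ → ℕ) (hm : ∀ n, 0 < m n) (c : ℝ) (hc1 : c < 1)
    (h : Filter.limsup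
      (fun n : ℕ => ((((m n : ℝ) * ((n : ℝ) ^ 2)⁻¹) / Real.log (n : ℝ) : ℝ) : EReal))
      Filter.atTop ≤ (c : EReal)) :
    Filter.Tendsto (fun n : ℕ => gridMeasure (m n) n {ω | minAssign ω = 0}) Filter.atTop
      (nhds (1 : ENNReal)) := by
  obtain ⟨c', hcc', hc'1⟩ := exists_between (max_lt hc1 zero_lt_one)
  have hc'0 : 0 ≤ c' := ((le_max_right c 0).trans_lt hcc').le
  have hev : ∀ᶠ n : ℕ in atTop,
      (m n : ℝ) * ((n : ℝ) ^ 2)⁻¹ / Real.log (n : ℝ) ≤ c' := by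
    have hlt : (c : EReal) < (c' : EReal) :=
      EReal.coe_lt_coe_iff.2 ((le_max_left c 0).trans_lt hcc')
    filter_upwards [eventually_lt_of_limsup_lt (h.trans_lt hlt)] with n hn
    exact (EReal.coe_lt_coe_iff.1 hn).le
  set a : ℝ := Real.exp (-1) / 2 with ha
  have ha0 : 0 < a := by positivity
  have hδ : 0 < 1 - c' := by linarith
  have hlim (d : ℕ) := tendsto_pow_mul_exp_neg_rpow d ha0 hδ
  have hbound : ∀ᶠ n : ℕ in atTop, gridMeasure (m n) n {ω | minAssign ω ≠ 0} ≤
      ENNReal.ofReal ((n : ℝ) ^ 3 * Real.exp (-(a * (n : ℝ) ^ (1 - c')))) := by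
    filter_upwards [hev, eventually_ge_atTop 2,
      (hlim 2).eventually (ge_mem_nhds zero_lt_one)] with n hn hn2 hsmall
    have hn0 : (0 : ℝ) < n := by exact_mod_cast (by omega : 0 < n)
    have e : (n : ℝ) ^ (-c') * Real.exp (-1) * n / 2 = a * (n : ℝ) ^ (1 - c') := by
      rw [sub_eq_neg_add, Real.rpow_add hn0, Real.rpow_one, ha]; ring
    have := gridMeasure_minAssign_ne_zero_le (by omega : 1 ≤ n) (by positivity)
      (rpow_neg_mul_exp_le_one_sub_inv_pow hc'0 hc'1.le hn2 hn) (by rwa [e])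
    rwa [e] at this
  have htend : Tendsto (fun n : ℕ => gridMeasure (m n) n {ω | minAssign ω ≠ 0}) atTop
      (nhds 0) := by
    refine tendsto_of_tendsto_of_tendsto_of_le_of_le' tendsto_const_nhds ?_
      (Eventually.of_forall fun _ => zero_le) hbound
    simpa using ENNReal.tendsto_ofReal (hlim 3)
  have hsub := ENNReal.Tendsto.sub (tendsto_const_nhds (x := (1 : ENNReal))) htend
    (Or.inl ENNReal.one_ne_top)
  rw [tsub_zero] at hsub
  refine hsub.congr' ?_
  filter_upwards [eventually_ge_atTop 1] with n hn
  have hprob : IsProbabilityMeasure (gridMeasure (m n) n) := by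
    refine ⟨?_⟩
    rw [← Finset.coe_univ, gridMeasure_apply _ (by omega)]
    have hn' : ((n : ENNReal) ^ 2) ≠ 0 := pow_ne_zero 2 (by exact_mod_cast (by omega : n ≠ 0))
    have hc : ((Finset.univ : Finset (Fin (m n) → Fin n × Fin n)).card : ENNReal) =
        ((n : ENNReal) ^ 2) ^ m n := by
      simp [sq]
    rw [hc, ← mul_pow, ENNReal.mul_inv_cancel hn' (by finiteness), one_pow]
  have hmeas : MeasurableSet {ω : Fin (m n) → Fin n × Fin n | minAssign ω ≠ 0} :=
    (Set.toFinite _).measurableSet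
  rw [← prob_compl_eq_one_sub hmeas]
  congr 1
  ext ω
  simp
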